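/- arXiv:2408.08218 — 6 statements merged into one kernel-verified Lean document; each statement's English description precedes it below -/
import Mathlib

section
/- Let m be a positive integer. If m is odd, then the maximum element of F_m equals (2/3)(2^m+1) - 1, and if m is even, then the maximum element of F_m equals (2/3)(2^m-1). -/
open Polynomial

/-- `fibSet m` is the set of fibbinary integers below `2^m`: integers in `{0,…,2^m-1}`
whose binary representation has no two consecutive ones. -/
noncomputable def fibSet (m : ℕ) : Finset ℕ :=
  @Finset.filter _ (fun i => ∀ j : ℕ, ¬(i.testBit j ∧ i.testBit (j + 1)))
    (Classical.decPred _) (Finset.range (2 ^ m))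

def FibP (i : ℕ) : Prop := ∀ j : ℕ, ¬(i.testBit j ∧ i.testBit (j + 1))

theorem fibP_iff (i : ℕ) : FibP i ↔ (FibP (i / 2) ∧ ¬ (i % 2 = 1 ∧ (i / 2) % 2 = 1)) := by
  unfold FibP
  constructor
  · intro h
    refine ⟨fun j => ?_, ?_⟩
    · have := h (j + 1)
      simpa only [Nat.testBit_succ] using this
    · have := h 0
      simpa [Nat.testBit_succ, Nat.testBit_zero] using this
  · rintro ⟨h1, h2⟩ j
    cases j with
    | zero => simpa [Nat.testBit_succ, Nat.testBit_zero] using h2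
    | succ j =>
      have := h1 j
      simpa only [Nat.testBit_succ] using this

theorem fib_exists (m : ℕ) : ∃ a, a < 2 ^ m ∧ FibP a ∧ (∀ i < 2 ^ m, FibP i → i ≤ a) ∧
    ((m % 2 = 0 ∧ 3 * a + 2 = 2 * 2 ^ m ∧ a % 2 = 0) ∨
     (m % 2 = 1 ∧ 3 * a + 1 = 2 * 2 ^ m ∧ a % 2 = 1)) := by
  induction m with
  | zero => exact ⟨0, by simp, by simp [FibP], by simp, by simp⟩
  | succ m ih =>
    obtain ⟨a, h1, h2, h3, h4⟩ := ih
    have hp : 2 ^ (m + 1) = 2 * 2 ^ m := by ring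
    rw [hp]
    rcases h4 with ⟨hm, he, ha⟩ | ⟨hm, he, ha⟩
    · refine ⟨2 * a + 1, by omega, ?_, ?_, by omega⟩
      · rw [fibP_iff]
        have : (2 * a + 1) / 2 = a := by omega
        rw [this]
        exact ⟨h2, by omega⟩
      · intro i hi hP
        rw [fibP_iff] at hP
        have := h3 (i / 2) (by omega) hP.1
        omega
    · refine ⟨2 * a, by omega, ?_, ?_, by omega⟩
      · rw [fibP_iff]
        have : (2 * a) / 2 = a := by omega
        rw [this]
        exact ⟨h2, by omega⟩
      · intro i hi hP
        rw [fibP_iff] at hP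
        have := h3 (i / 2) (by omega) hP.1
        have := hP.2
        by_cases hq : i / 2 = a
        · rw [hq] at this
          omega
        · omega

theorem fib_max (m a : ℕ) (h1 : a < 2 ^ m) (h2 : FibP a)
    (h3 : ∀ i < 2 ^ m, FibP i → i ≤ a) : (fibSet m).max = (a : ℕ) := by
  apply le_antisymm
  · apply Finset.max_le
    intro i hi
    simp only [fibSet, Finset.mem_filter, Finset.mem_range] at hi
    exact WithBot.coe_le_coe.mpr (h3 i hi.1 hi.2)
  · apply Finset.le_max
    simp only [fibSet, Finset.mem_filter, Finset.mem_range]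
    exact ⟨h1, h2⟩

theorem max_fibSet (m : ℕ) (hm : 0 < m) :
    (Odd m → (fibSet m).max = ((2 * (2 ^ m + 1)) / 3 - 1 : ℕ)) ∧
    (Even m → (fibSet m).max = ((2 * (2 ^ m - 1)) / 3 : ℕ)) := by
  obtain ⟨a, h1, h2, h3, h4⟩ := fib_exists m
  rw [fib_max m a h1 h2 h3]
  constructor
  · intro h
    rw [Nat.odd_iff] at h
    have : (2 * (2 ^ m + 1)) / 3 - 1 = a := by omega
    rw [this]
  · intro h
    rw [Nat.even_iff] at h
    have : (2 * (2 ^ m - 1)) / 3 = a := by omega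
    rw [this]
end

section
/- Let m be a positive integer with m ≥ 2. If m is odd, then the maximum element of F^cyc_m equals (2/3)(2^m+1) - 2, and if m is even, then the maximum element of F^cyc_m equals (2/3)(2^m-1). -/
open Polynomial

/-- `fibCycSet m` is the set of integers in `{1,…,2^m-2}` whose `m`-bit binary
representation has no two cyclically consecutive ones. -/
def fibCycSet (m : ℕ) : Finset ℕ :=
  (Finset.Icc 1 (2 ^ m - 2)).filter
    (fun i => ∀ j < m, ¬(i.testBit j ∧ i.testBit ((j + 1) % m)))

theorem fib_bound_aux (k : ℕ) : ∀ n : ℕ, n < 2 ^ k →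
    (∀ j : ℕ, ¬(n.testBit j ∧ n.testBit (j + 1))) → 3 * n + 1 ≤ 2 ^ (k + 1) := by
  induction k using Nat.strong_induction_on with
  | _ k ih =>
    intro n hn hf
    rcases k with _ | k
    · simp at hn; subst hn; simp
    · have h2 : ∀ j : ℕ, ¬((n / 2).testBit j ∧ (n / 2).testBit (j + 1)) := by
        intro j; have := hf (j + 1); simpa [Nat.testBit_succ] using this
      have h1 := ih k (by omega) (n / 2) (by rw [pow_succ] at hn; omega) h2
      rcases Nat.mod_two_eq_zero_or_one n with h | h
      · rw [pow_succ]; omega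
      · have h0 := hf 0
        simp [Nat.testBit_succ, Nat.testBit_zero, h] at h0
        rcases k with _ | k
        · simp at hn ⊢; omega
        · have h4 : ∀ j : ℕ, ¬((n / 2 / 2).testBit j ∧ (n / 2 / 2).testBit (j + 1)) := by
            intro j; have := h2 (j + 1); simpa [Nat.testBit_succ] using this
          have h5 := ih k (by omega) (n / 2 / 2) (by rw [pow_succ, pow_succ] at hn; omega) h4
          rw [pow_succ, pow_succ]; omega

theorem alt_aux (t : ℕ) : ∃ a : ℕ, 3 * a + 2 = 2 * 2 ^ (2 * t) ∧
    ∀ j, a.testBit j = true → j % 2 = 1 := by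
  induction t with
  | zero => exact ⟨0, by simp, by simp⟩
  | succ t ih =>
    obtain ⟨a, ha, hb⟩ := ih
    refine ⟨4 * a + 2, ?_, ?_⟩
    · rw [show 2 * (t + 1) = 2 * t + 1 + 1 by ring, pow_succ, pow_succ]; omega
    · intro j hj
      rcases j with _ | _ | j
      · rw [Nat.testBit_zero] at hj
        simp at hj; omega
      · rfl
      · rw [Nat.testBit_succ, Nat.testBit_succ, show (4 * a + 2) / 2 / 2 = a by omega] at hj
        have := hb j hj
        omega

theorem cyc_fib_aux (m n : ℕ) (hn : n < 2 ^ m)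
    (h : ∀ j < m, ¬(n.testBit j ∧ n.testBit ((j + 1) % m))) :
    ∀ j : ℕ, ¬(n.testBit j ∧ n.testBit (j + 1)) := by
  rintro j ⟨h1, h2⟩
  by_cases hj : j + 1 < m
  · exact h j (by omega) ⟨h1, by rwa [Nat.mod_eq_of_lt hj]⟩
  · rw [Nat.testBit_lt_two_pow (lt_of_lt_of_le hn (Nat.pow_le_pow_right (by norm_num) (by omega)))] at h2
    cases h2

theorem max_aux (s : Finset ℕ) (a : ℕ) (h1 : a ∈ s) (h2 : ∀ b ∈ s, b ≤ a) :
    s.max = (a : ℕ) :=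
  le_antisymm (Finset.max_le fun b hb => WithBot.coe_le_coe.2 (h2 b hb)) (Finset.le_max h1)

theorem max_fibCycSet (m : ℕ) (hm : 2 ≤ m) :
    (Odd m → (fibCycSet m).max = ((2 * (2 ^ m + 1)) / 3 - 2 : ℕ)) ∧
    (Even m → (fibCycSet m).max = ((2 * (2 ^ m - 1)) / 3 : ℕ)) := by
  constructor
  · rintro ⟨t, rfl⟩
    obtain ⟨a, ha, hb⟩ := alt_aux t
    have ht : 4 ≤ 2 ^ (2 * t) := Nat.pow_le_pow_right (n := 2) (by norm_num) (show 2 ≤ 2 * t by omega)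
    have hp : 2 ^ (2 * t + 1) = 2 * 2 ^ (2 * t) := by rw [pow_succ]; ring
    have he : (2 * (2 ^ (2 * t + 1) + 1)) / 3 - 2 = 2 * a := by omega
    rw [he]
    apply max_aux
    · simp only [fibCycSet, Finset.mem_filter, Finset.mem_Icc]
      rw [hp]
      refine ⟨by omega, ?_⟩
      have hc : ∀ j, (2 * a).testBit j = true → j % 2 = 0 ∧ j ≠ 0 := by
        intro j hj
        rcases j with _ | j
        · rw [Nat.testBit_zero] at hj
          simp at hj
        · rw [Nat.testBit_succ, show 2 * a / 2 = a by omega] at hj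
          have := hb j hj
          omega
      rintro j hj ⟨h1, h2⟩
      have h1 := hc _ h1
      have h2 := hc _ h2
      by_cases h : j + 1 < 2 * t + 1
      · rw [Nat.mod_eq_of_lt h] at h2; omega
      · have : j + 1 = 2 * t + 1 := by omega
        rw [this, Nat.mod_self] at h2; omega
    · intro n hn
      simp only [fibCycSet, Finset.mem_filter, Finset.mem_Icc] at hn
      obtain ⟨hn1, hn2⟩ := hn
      rw [hp] at hn1
      have hlt : n < 2 ^ (2 * t + 1) := by rw [hp]; omega
      have hf := cyc_fib_aux _ n hlt hn2
      rcases Nat.mod_two_eq_zero_or_one n with h | h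
      · have h3 : ∀ j : ℕ, ¬((n / 2).testBit j ∧ (n / 2).testBit (j + 1)) := by
          intro j; have := hf (j + 1); simpa [Nat.testBit_succ] using this
        have := fib_bound_aux (2 * t) (n / 2) (by omega) h3
        omega
      · have h3 := hn2 (2 * t) (by omega)
        rw [Nat.mod_self] at h3
        have h4 : n.testBit (2 * t) = false := by
          simpa [Nat.testBit_zero, h] using h3
        have h5 : n < 2 ^ (2 * t) := by
          by_contra hcon
          rw [Nat.testBit_eq_decide_div_mod_eq] at h4
          have : n / 2 ^ (2 * t) = 1 := by
            apply Nat.div_eq_of_lt_le <;> omega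
          simp [this] at h4
        have := fib_bound_aux (2 * t) n h5 hf
        omega
  · rintro ⟨t, rfl⟩
    rw [← two_mul] at *
    obtain ⟨a, ha, hb⟩ := alt_aux t
    have ht : 4 ≤ 2 ^ (2 * t) := Nat.pow_le_pow_right (n := 2) (by norm_num) (show 2 ≤ 2 * t by omega)
    have he : (2 * (2 ^ (2 * t) - 1)) / 3 = a := by omega
    rw [he]
    apply max_aux
    · simp only [fibCycSet, Finset.mem_filter, Finset.mem_Icc]
      refine ⟨by omega, ?_⟩
      rintro j hj ⟨h1, h2⟩
      have h1 := hb _ h1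
      have h2 := hb _ h2
      rw [Nat.mod_mod_of_dvd _ (Dvd.intro t rfl)] at h2
      omega
    · intro n hn
      simp only [fibCycSet, Finset.mem_filter, Finset.mem_Icc] at hn
      obtain ⟨hn1, hn2⟩ := hn
      have hlt : n < 2 ^ (2 * t) := by omega
      have := fib_bound_aux (2 * t) n hlt (cyc_fib_aux _ n hlt hn2)
      rw [pow_succ] at this
      omega
end

section
/- For every integer m ≥ 4, the identity f^cyc_m(X) = X·f_{m-3}(X^4) + 1 + f_{m-1}(X^2) holds in F_2[X]. -/
open Polynomial

/-- The `m`-th fibbinary polynomial over `F_2`. -/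
noncomputable def fibPoly (m : ℕ) : Polynomial (ZMod 2) :=
  ∑ i ∈ fibSet m, X ^ i

/-- The `m`-th cyclic fibbinary polynomial over `F_2`. -/
noncomputable def fibCycPoly (m : ℕ) : Polynomial (ZMod 2) :=
  ∑ i ∈ fibCycSet m, X ^ i

theorem tb4 (i j : ℕ) : (4 * i + 1).testBit (j + 2) = i.testBit j := by
  rw [show j + 2 = (j+1)+1 from rfl, Nat.testBit_succ, Nat.testBit_succ]
  congr 1; omega

theorem tb41 (i : ℕ) : (4 * i + 1).testBit 1 = false := by
  rw [show 1 = 0+1 from rfl, Nat.testBit_succ, Nat.testBit_zero]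
  simp; omega

theorem tb40 (i : ℕ) : (4 * i + 1).testBit 0 = true := by
  rw [Nat.testBit_zero]
  simp; omega

theorem tb2 (i j : ℕ) : (2 * i).testBit (j + 1) = i.testBit j := by
  rw [Nat.testBit_succ]
  congr 1; omega

theorem tb20 (i : ℕ) : (2 * i).testBit 0 = false := by
  rw [Nat.testBit_zero]
  simp

theorem mem_fibSet' (m i : ℕ) : i ∈ fibSet m ↔
    i < 2 ^ m ∧ ∀ j : ℕ, ¬(i.testBit j ∧ i.testBit (j + 1)) := by
  unfold fibSet
  rw [@Finset.mem_filter _ _ (Classical.decPred _), Finset.mem_range]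

theorem tb_lt {i m j : ℕ} (h : i < 2 ^ m) (hj : i.testBit j = true) : j < m := by
  by_contra hc
  have := Nat.testBit_lt_two_pow (lt_of_lt_of_le h (Nat.pow_le_pow_right (by norm_num) (not_lt.mp hc)))
  simp [this] at hj

theorem mem_insert_cyc (m n : ℕ) (hm : 4 ≤ m) : n ∈ insert 0 (fibCycSet m) ↔
    n < 2 ^ m ∧ ∀ j < m, ¬(n.testBit j ∧ n.testBit ((j + 1) % m)) := by
  have hp : 2 ^ 4 ≤ 2 ^ m := Nat.pow_le_pow_right (by norm_num) hm
  unfold fibCycSet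
  rw [Finset.mem_insert, Finset.mem_filter, Finset.mem_Icc]
  constructor
  · rintro (rfl | ⟨h, h'⟩)
    · simp
    · exact ⟨by omega, h'⟩
  · rintro ⟨h, h'⟩
    by_cases h0 : n = 0
    · exact Or.inl h0
    · refine Or.inr ⟨⟨by omega, ?_⟩, h'⟩
      by_contra hc
      have hn : n = 2 ^ m - 1 := by omega
      apply h' 0 (by omega)
      rw [hn, Nat.testBit_two_pow_sub_one, Nat.testBit_two_pow_sub_one,
        Nat.mod_eq_of_lt (by omega)]
      simp; omega

theorem cyc_even (m i : ℕ) (hm : 4 ≤ m) : 2 * i ∈ insert 0 (fibCycSet m) ↔ i ∈ fibSet (m - 1) := by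
  rw [mem_insert_cyc m _ hm, mem_fibSet']
  obtain ⟨k, rfl⟩ : ∃ k, m = k + 1 := ⟨m - 1, by omega⟩
  simp only [Nat.add_sub_cancel, pow_succ]
  constructor
  · rintro ⟨h, h'⟩
    have hi : i < 2 ^ k := by omega
    refine ⟨hi, fun j ⟨h1, h2⟩ => ?_⟩
    have := tb_lt hi h2
    apply h' (j+1) (by omega)
    rw [Nat.mod_eq_of_lt (by omega), tb2, tb2]
    exact ⟨h1, h2⟩
  · rintro ⟨h, h'⟩
    refine ⟨by omega, fun j hj ⟨h1, h2⟩ => ?_⟩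
    by_cases hk : j = k
    · subst hk
      rw [Nat.mod_self, tb20] at h2
      simp at h2
    · rw [Nat.mod_eq_of_lt (by omega)] at h2
      cases j with
      | zero => rw [tb20] at h1; simp at h1
      | succ j => rw [tb2] at h1 h2; exact h' j ⟨h1, h2⟩

theorem cyc_four (m i : ℕ) (hm : 4 ≤ m) :
    4 * i + 1 ∈ insert 0 (fibCycSet m) ↔ i ∈ fibSet (m - 3) := by
  rw [mem_insert_cyc m _ hm, mem_fibSet']
  obtain ⟨k, rfl⟩ : ∃ k, m = k + 3 := ⟨m - 3, by omega⟩
  simp only [Nat.add_sub_cancel]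
  constructor
  · rintro ⟨h, h'⟩
    have hi1 : i < 2 ^ (k + 1) := by
      rw [show k + 3 = (k + 1) + 2 from rfl, pow_add] at h; omega
    have hi : i < 2 ^ k := by
      apply Nat.lt_pow_two_of_testBit
      intro j hj
      by_contra hc
      rw [Bool.not_eq_false] at hc
      have := tb_lt hi1 hc
      obtain rfl : j = k := by omega
      apply h' (j + 2) (by omega)
      rw [show j + 2 + 1 = j + 3 from rfl, Nat.mod_self, tb4, tb40]
      exact ⟨hc, rfl⟩
    refine ⟨hi, fun j ⟨h1, h2⟩ => ?_⟩
    have := tb_lt hi h2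
    apply h' (j+2) (by omega)
    rw [Nat.mod_eq_of_lt (by omega), tb4, show j + 2 + 1 = (j + 1) + 2 from rfl, tb4]
    exact ⟨h1, h2⟩
  · rintro ⟨h, h'⟩
    refine ⟨by rw [pow_add]; omega, fun j hj ⟨h1, h2⟩ => ?_⟩
    match j with
    | 0 => rw [Nat.mod_eq_of_lt (by omega), zero_add, tb41] at h2; simp at h2
    | 1 => rw [tb41] at h1; simp at h1
    | j + 2 =>
      rw [tb4] at h1
      have := tb_lt h h1
      rw [Nat.mod_eq_of_lt (by omega), show j + 2 + 1 = (j + 1) + 2 from rfl, tb4] at h2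
      exact h' j ⟨h1, h2⟩

theorem cyc_three (m i : ℕ) (hm : 4 ≤ m) : 4 * i + 3 ∉ insert 0 (fibCycSet m) := by
  rw [mem_insert_cyc m _ hm]
  rintro ⟨_, h⟩
  apply h 0 (by omega)
  rw [Nat.mod_eq_of_lt (by omega), zero_add, Nat.testBit_zero, show 1 = 0+1 from rfl,
    Nat.testBit_succ, Nat.testBit_zero]
  simp; omega

theorem fibCycPoly_eq (m : ℕ) (hm : 4 ≤ m) :
    fibCycPoly m =
      X * (fibPoly (m - 3)).comp (X ^ 4) + 1 + (fibPoly (m - 1)).comp (X ^ 2) := by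
  have hset : insert 0 (fibCycSet m) =
      (fibSet (m - 3)).image (fun i => 4 * i + 1) ∪ (fibSet (m - 1)).image (fun i => 2 * i) := by
    ext n
    rw [Finset.mem_union, Finset.mem_image, Finset.mem_image]
    constructor
    · intro h
      have : (∃ i, n = 2 * i) ∨ (∃ i, n = 4 * i + 1) ∨ ∃ i, n = 4 * i + 3 := by
        have : n % 4 < 4 := Nat.mod_lt _ (by norm_num)
        by_cases h2 : n % 2 = 0
        · exact Or.inl ⟨n / 2, by omega⟩
        · by_cases h1 : n % 4 = 1
          · exact Or.inr (Or.inl ⟨n / 4, by omega⟩)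
          · exact Or.inr (Or.inr ⟨n / 4, by omega⟩)
      obtain ⟨i, rfl⟩ | ⟨i, rfl⟩ | ⟨i, rfl⟩ := this
      · exact Or.inr ⟨i, (cyc_even m i hm).1 h, rfl⟩
      · exact Or.inl ⟨i, (cyc_four m i hm).1 h, rfl⟩
      · exact absurd h (cyc_three m i hm)
    · rintro (⟨i, h, rfl⟩ | ⟨i, h, rfl⟩)
      · exact (cyc_four m i hm).2 h
      · exact (cyc_even m i hm).2 h
  have hsum : (1 : Polynomial (ZMod 2)) + fibCycPoly m =
      X * (fibPoly (m - 3)).comp (X ^ 4) + (fibPoly (m - 1)).comp (X ^ 2) := by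
    have h0 : 0 ∉ fibCycSet m := by simp [fibCycSet]
    have := Finset.sum_insert (f := fun i => (X : Polynomial (ZMod 2)) ^ i) h0
    rw [hset, Finset.sum_union, Finset.sum_image, Finset.sum_image] at this
    · rw [pow_zero] at this
      unfold fibCycPoly
      rw [← this]
      unfold fibPoly
      simp only [Polynomial.sum_comp, Polynomial.X_pow_comp, Finset.mul_sum]
      congr 1
      · exact Finset.sum_congr rfl fun i _ => by rw [← pow_mul]; ring
      · exact Finset.sum_congr rfl fun i _ => by rw [← pow_mul]
    · intro a _ b _ h; simp at h; omega
    · intro a _ b _ h; simp at h; omega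
    · rw [Finset.disjoint_left]
      intro a h1 h2
      simp only [Finset.mem_image] at h1 h2
      obtain ⟨x, _, hx⟩ := h1
      obtain ⟨y, _, hy⟩ := h2
      omega
  have h2 : (1 : Polynomial (ZMod 2)) + 1 = 0 := CharTwo.add_self_eq_zero 1
  linear_combination hsum - h2
end

section
/- For every integer m ≥ 4, the set of even elements of F^cyc_m equals {2j : j ∈ F_{m-1}} \ {0}, and the set of odd elements of F^cyc_m equals {4j+1 : j ∈ F_{m-3}}. -/
open Polynomial

theorem aux_mem (m x : ℕ) (hm : 4 ≤ m) : x ∈ fibCycSet m ↔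
    0 < x ∧ x < 2 ^ m ∧ (∀ j : ℕ, ¬(x.testBit j ∧ x.testBit (j + 1))) ∧
      (x % 2 = 1 → x < 2 ^ (m - 1)) := by
  obtain ⟨n, rfl⟩ : ∃ n, m = n + 4 := ⟨m - 4, by omega⟩
  have hp : 2 ^ (n + 4) = 16 * 2 ^ n := by rw [pow_add]; ring
  have hpos : 0 < 2 ^ n := by positivity
  simp only [fibCycSet, Finset.mem_filter, Finset.mem_Icc]
  constructor
  · rintro ⟨⟨h1, h2⟩, h3⟩
    have hlt : x < 2 ^ (n + 4) := by omega
    refine ⟨h1, hlt, ?_, ?_⟩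
    · rintro j ⟨ha, hb⟩
      have hj : j + 1 < n + 4 := by
        by_contra hc
        have : x < 2 ^ (j + 1) := lt_of_lt_of_le hlt (Nat.pow_le_pow_right (by norm_num) (by omega))
        rw [Nat.testBit_lt_two_pow this] at hb
        exact absurd hb (by simp)
      exact h3 j (by omega) ⟨ha, by rwa [Nat.mod_eq_of_lt hj]⟩
    · intro hodd
      have h0 := h3 (n + 3) (by omega)
      rw [Nat.mod_self] at h0
      apply Nat.lt_pow_two_of_testBit
      intro i hi
      by_cases hi' : i = n + 3
      · subst hi'
        by_contra hc
        exact h0 ⟨by simpa using hc, by simp [Nat.testBit_zero, hodd]⟩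
      · exact Nat.testBit_lt_two_pow
          (lt_of_lt_of_le hlt (Nat.pow_le_pow_right (by norm_num) (by omega)))
  · rintro ⟨h1, h2, h3, h4⟩
    refine ⟨⟨h1, ?_⟩, ?_⟩
    · have h5 : n + 4 - 1 = n + 3 := rfl
      have h6 : 2 ^ (n + 3) = 8 * 2 ^ n := by rw [pow_add]; ring
      rw [h5, h6] at h4
      omega
    · rintro j hj ⟨ha, hb⟩
      by_cases hj' : j + 1 < n + 4
      · rw [Nat.mod_eq_of_lt hj'] at hb
        exact h3 j ⟨ha, hb⟩
      · have hjj : j = n + 3 := by omega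
        subst hjj
        rw [Nat.mod_self] at hb
        have : x < 2 ^ (n + 3) := h4 (by simpa [Nat.testBit_zero] using hb)
        rw [Nat.testBit_lt_two_pow this] at ha
        exact absurd ha (by simp)

theorem aux_step (x : ℕ) : (∀ j : ℕ, ¬(x.testBit j ∧ x.testBit (j + 1))) ↔
    x % 4 ≠ 3 ∧ (∀ j : ℕ, ¬((x / 2).testBit j ∧ (x / 2).testBit (j + 1))) := by
  have h0 : (x.testBit 0 ∧ x.testBit (0 + 1)) ↔ x % 4 = 3 := by
    simp only [Nat.testBit_succ, Nat.testBit_zero, decide_eq_true_eq]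
    omega
  constructor
  · intro h
    refine ⟨fun hc => h 0 (h0.2 hc), fun j hj => h (j + 1) ?_⟩
    simpa only [Nat.testBit_succ] using hj
  · rintro ⟨h1, h2⟩ j hj
    cases j with
    | zero => exact h1 (h0.1 hj)
    | succ j => exact h2 j (by simpa only [Nat.testBit_succ] using hj)

theorem aux_fib (m x : ℕ) : x ∈ fibSet m ↔
    x < 2 ^ m ∧ ∀ j : ℕ, ¬(x.testBit j ∧ x.testBit (j + 1)) := by
  unfold fibSet
  simp only [Finset.mem_filter, Finset.mem_range]

theorem fibCycSet_even_odd (m : ℕ) (hm : 4 ≤ m) :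
    (fibCycSet m).filter (fun i => Even i) =
        ((fibSet (m - 1)).image (fun j => 2 * j)) \ {0} ∧
    (fibCycSet m).filter (fun i => Odd i) =
        (fibSet (m - 3)).image (fun j => 4 * j + 1) := by
  obtain ⟨n, rfl⟩ : ∃ n, m = n + 4 := ⟨m - 4, by omega⟩
  have hp4 : 2 ^ (n + 4) = 16 * 2 ^ n := by rw [pow_add]; ring
  have hp3 : 2 ^ (n + 3) = 8 * 2 ^ n := by rw [pow_add]; ring
  have hp1 : 2 ^ (n + 1) = 2 * 2 ^ n := by rw [pow_add]; ring
  have e1 : n + 4 - 1 = n + 3 := rfl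
  have e3 : n + 4 - 3 = n + 1 := rfl
  constructor
  · ext x
    simp only [Finset.mem_filter, Finset.mem_sdiff, Finset.mem_image, Finset.mem_singleton,
      aux_mem _ _ hm, aux_fib, Nat.even_iff, e1, hp3, hp4]
    constructor
    · rintro ⟨⟨h1, h2, h3, h4⟩, h5⟩
      exact ⟨⟨x / 2, ⟨by omega, ((aux_step x).1 h3).2⟩, by omega⟩, by omega⟩
    · rintro ⟨⟨j, ⟨h1, h2⟩, rfl⟩, h3⟩
      refine ⟨⟨by omega, by omega, (aux_step _).2 ⟨by omega, ?_⟩, by omega⟩, by omega⟩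
      rwa [show 2 * j / 2 = j by omega]
  · ext x
    simp only [Finset.mem_filter, Finset.mem_image,
      aux_mem _ _ hm, aux_fib, Nat.odd_iff, e1, e3, hp1, hp3, hp4]
    constructor
    · rintro ⟨⟨h1, h2, h3, h4⟩, h5⟩
      have h6 := (aux_step x).1 h3
      have h7 := ((aux_step (x / 2)).1 h6.2).2
      have h8 := h6.1
      exact ⟨x / 2 / 2, ⟨by omega, h7⟩, by omega⟩
    · rintro ⟨j, ⟨h1, h2⟩, rfl⟩
      refine ⟨⟨by omega, by omega, (aux_step _).2 ⟨by omega, (aux_step _).2 ⟨by omega, ?_⟩⟩,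
        by omega⟩, by omega⟩
      rwa [show (4 * j + 1) / 2 / 2 = j by omega]
end

section
/- For every integer m ≥ 4, the number of nonzero elements β of the finite field F_{2^m} with f^cyc_m(β) = 0 is at most (2^m+1)/3 if m is odd, and at most (2^m-1)/3 if m is even. -/
open Polynomial

lemma mem_fibSet_iff (k i : ℕ) :
    i ∈ fibSet k ↔ i < 2 ^ k ∧ ∀ j : ℕ, ¬(i.testBit j ∧ i.testBit (j + 1)) := by
  simp [fibSet]

lemma testBit_top (k i j : ℕ) (h : i < 2 ^ k) :
    (2 ^ k + i).testBit j = (decide (j = k) || i.testBit j) := by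
  rcases lt_trichotomy j k with hj | hj | hj
  · rw [Nat.testBit_two_pow_add_gt hj]; simp [hj.ne]
  · subst hj; rw [Nat.testBit_two_pow_add_eq, Nat.testBit_lt_two_pow h]; simp
  · have h1 : 2 ^ k + i < 2 ^ j := by
      have : 2 ^ (k + 1) ≤ 2 ^ j := Nat.pow_le_pow_right (by norm_num) hj
      rw [pow_succ] at this; omega
    have h2 : i < 2 ^ j := by omega
    rw [Nat.testBit_lt_two_pow h1, Nat.testBit_lt_two_pow h2]; simp [hj.ne']

lemma lt_of_top (k i : ℕ) (h : i < 2 ^ (k + 1)) (hb : i.testBit k = false) : i < 2 ^ k := by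
  apply Nat.lt_pow_two_of_testBit
  intro j hj
  rcases hj.eq_or_lt with rfl | hj
  · exact hb
  · apply Nat.testBit_lt_two_pow
    exact lt_of_lt_of_le h (Nat.pow_le_pow_right (by norm_num) hj)

lemma mem_fib_top (k i : ℕ) (h : i < 2 ^ (k + 1)) :
    2 ^ (k + 1) + i ∈ fibSet (k + 2) ↔ i ∈ fibSet k := by
  rw [mem_fibSet_iff, mem_fibSet_iff]
  have hlt : 2 ^ (k + 1) + i < 2 ^ (k + 2) := by rw [pow_succ 2 (k + 1)]; omega
  simp only [testBit_top _ _ _ h]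
  constructor
  · rintro ⟨-, h2⟩
    refine ⟨lt_of_top k i h ?_, fun j hj => h2 j ?_⟩
    · have := h2 k
      simpa using this
    · simp [hj.1, hj.2]
  · rintro ⟨h1, h2⟩
    refine ⟨hlt, fun j hj => ?_⟩
    simp only [Bool.or_eq_true, decide_eq_true_eq] at hj
    obtain ⟨a | a, b | b⟩ := hj
    · omega
    · rw [Nat.testBit_lt_two_pow (lt_of_lt_of_le h1 (Nat.pow_le_pow_right (by norm_num) (by omega)))] at b
      simp at b
    · have : j = k := by omega
      subst this
      rw [Nat.testBit_lt_two_pow h1] at a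
      simp at a
    · exact h2 j ⟨a, b⟩

lemma sum_split {K : Type*} [Field K] (β : K) (k : ℕ) (P : ℕ → Prop) [DecidablePred P] :
    ∑ i ∈ (Finset.range (2 ^ (k + 1))).filter P, β ^ i =
    ∑ i ∈ (Finset.range (2 ^ k)).filter P, β ^ i +
    β ^ (2 ^ k) * ∑ i ∈ (Finset.range (2 ^ k)).filter (fun i => P (2 ^ k + i)), β ^ i := by
  rw [pow_succ, mul_two, Finset.sum_filter, Finset.sum_range_add, Finset.sum_filter,
    Finset.sum_filter, Finset.mul_sum]
  congr 1
  apply Finset.sum_congr rfl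
  intro i _
  split_ifs <;> simp [pow_add]

open Classical in
/-- fib sum with an extra condition -/
noncomputable def fs {K : Type*} [Field K] (β : K) (p : ℕ → Prop) (k : ℕ) : K :=
  ∑ i ∈ (Finset.range (2 ^ k)).filter (fun i => i ∈ fibSet k ∧ p i), β ^ i

open Classical in
lemma fs_rec {K : Type*} [Field K] (β : K) (p : ℕ → Prop)
    (k : ℕ) (hp : ∀ i, p (2 ^ (k + 1) + i) ↔ p i) :
    fs β p (k + 2) = fs β p (k + 1) + β ^ (2 ^ (k + 1)) * fs β p k := by
  unfold fs
  rw [sum_split]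
  congr 1
  · apply Finset.sum_congr _ (fun _ _ => rfl)
    ext i
    simp only [Finset.mem_filter, Finset.mem_range, mem_fibSet_iff]
    have : 2 ^ (k + 1) < 2 ^ (k + 2) := Nat.pow_lt_pow_right (by norm_num) (by omega)
    constructor
    · rintro ⟨a, ⟨b, c⟩, d⟩; exact ⟨a, ⟨a, c⟩, d⟩
    · rintro ⟨a, ⟨b, c⟩, d⟩; exact ⟨a, ⟨by omega, c⟩, d⟩
  · congr 1
    apply Finset.sum_congr _ (fun _ _ => rfl)
    ext i
    simp only [Finset.mem_filter, Finset.mem_range, hp]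
    have : 2 ^ k < 2 ^ (k + 1) := Nat.pow_lt_pow_right (by norm_num) (by omega)
    constructor
    · rintro ⟨a, b, d⟩
      have := (mem_fib_top k i a).1 b
      exact ⟨((mem_fibSet_iff _ _).1 this).1, this, d⟩
    · rintro ⟨a, b, d⟩; exact ⟨by omega, (mem_fib_top k i (by omega)).2 b, d⟩

lemma mem_fibSet_zero : 0 ∈ fibSet 0 := by simp [mem_fibSet_iff]

lemma mem_fibSet_one0 : 0 ∈ fibSet 1 := by simp [mem_fibSet_iff]

lemma mem_fibSet_one1 : 1 ∈ fibSet 1 := by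
  rw [mem_fibSet_iff]; refine ⟨by norm_num, fun j => ?_⟩
  rw [Nat.testBit_lt_two_pow (i := j + 1) (Nat.one_lt_two_pow (by omega))]; simp

lemma F0 {K : Type*} [Field K] (β : K) : fs β (fun _ => True) 0 = 1 := by
  simp [fs, mem_fibSet_zero, Finset.sum_filter]
lemma F1 {K : Type*} [Field K] (β : K) : fs β (fun _ => True) 1 = 1 + β := by
  rw [fs, Finset.sum_filter]
  simp [mem_fibSet_one0, mem_fibSet_one1, Finset.sum_range_succ, -Finset.sum_ite_mem]
lemma E0 {K : Type*} [Field K] (β : K) : fs β (fun i => i % 2 = 0) 0 = 1 := by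
  simp [fs, mem_fibSet_zero, Finset.sum_filter]
lemma E1 {K : Type*} [Field K] (β : K) : fs β (fun i => i % 2 = 0) 1 = 1 := by
  simp [fs, mem_fibSet_one0, mem_fibSet_one1, Finset.sum_filter, Finset.sum_range_succ]
lemma Frec {K : Type*} [Field K] (β : K) (k : ℕ) : fs β (fun _ => True) (k + 2) =
    fs β (fun _ => True) (k + 1) + β ^ (2 ^ (k + 1)) * fs β (fun _ => True) k :=
  fs_rec _ _ _ (by simp)
lemma Erec {K : Type*} [Field K] (β : K) (k : ℕ) : fs β (fun i => i % 2 = 0) (k + 2) =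
    fs β (fun i => i % 2 = 0) (k + 1) + β ^ (2 ^ (k + 1)) * fs β (fun i => i % 2 = 0) k :=
  fs_rec _ _ _ (by intro i; rw [pow_succ]; omega)

lemma insert_cyc (n : ℕ) : insert 0 (fibCycSet (n + 2)) =
    (Finset.range (2 ^ (n + 2))).filter
      (fun i => ∀ j < n + 2, ¬(i.testBit j ∧ i.testBit ((j + 1) % (n + 2)))) := by
  ext i
  simp only [fibCycSet, Finset.mem_insert, Finset.mem_filter, Finset.mem_Icc, Finset.mem_range]
  have h4 : 2 ^ (n + 2) ≥ 4 := by
    rw [pow_add]; have := Nat.one_le_two_pow (n := n); omega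
  constructor
  · rintro (rfl | ⟨a, b⟩)
    · simp
    · exact ⟨by omega, b⟩
  · rintro ⟨a, b⟩
    rcases Nat.eq_zero_or_pos i with h | h
    · exact Or.inl h
    right
    refine ⟨⟨h, ?_⟩, b⟩
    by_contra hc
    have : i = 2 ^ (n + 2) - 1 := by omega
    have := b 0 (by omega)
    subst i
    simp [Nat.testBit_two_pow_sub_one] at this

lemma cyc_iff (n i : ℕ) (hi : i < 2 ^ (n + 2)) :
    (∀ j < n + 2, ¬(i.testBit j ∧ i.testBit ((j + 1) % (n + 2)))) ↔
    i ∈ fibSet (n + 2) ∧ ¬ (i.testBit (n + 1) ∧ i.testBit 0) := by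
  rw [mem_fibSet_iff]
  constructor
  · intro h
    refine ⟨⟨hi, fun j => ?_⟩, ?_⟩
    · by_cases hj : j + 1 < n + 2
      · have := h j (by omega)
        rwa [Nat.mod_eq_of_lt hj] at this
      · rw [Nat.testBit_lt_two_pow (i := j + 1)
          (lt_of_lt_of_le hi (Nat.pow_le_pow_right (by norm_num) (by omega)))]; simp
    · have := h (n + 1) (by omega)
      simpa using this
  · rintro ⟨⟨-, h⟩, h'⟩ j hj
    by_cases hj' : j + 1 < n + 2
    · rw [Nat.mod_eq_of_lt hj']; exact h j
    · have : j = n + 1 := by omega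
      subst this
      simpa using h'

open Classical in
lemma cyc_sum {K : Type*} [Field K] (β : K) (n : ℕ) :
    1 + ∑ i ∈ fibCycSet (n + 2), β ^ i =
    fs β (fun _ => True) (n + 1) + β ^ (2 ^ (n + 1)) * fs β (fun i => i % 2 = 0) n := by
  have h0 : 0 ∉ fibCycSet (n + 2) := by simp [fibCycSet]
  have := Finset.sum_insert (f := fun i => β ^ i) h0
  rw [pow_zero] at this
  rw [← this, insert_cyc]
  rw [sum_split]
  unfold fs
  have hlt : 2 ^ (n + 2) = 2 * 2 ^ (n + 1) := by rw [pow_succ]; ring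
  have hlt' : 2 ^ (n + 1) = 2 * 2 ^ n := by rw [pow_succ]; ring
  congr 1
  · apply Finset.sum_congr _ (fun _ _ => rfl)
    ext i
    simp only [Finset.mem_filter, Finset.mem_range, and_true]
    refine and_congr_right fun hi => ?_
    rw [cyc_iff _ _ (by omega), Nat.testBit_lt_two_pow hi, mem_fibSet_iff, mem_fibSet_iff]
    simp [hi, (by omega : i < 2 ^ (n + 2))]
  · congr 1
    apply Finset.sum_congr _ (fun _ _ => rfl)
    ext i
    simp only [Finset.mem_filter, Finset.mem_range]
    have key : i < 2 ^ (n + 1) → ((∀ j < n + 2, ¬((2 ^ (n + 1) + i).testBit j ∧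
        (2 ^ (n + 1) + i).testBit ((j + 1) % (n + 2)))) ↔ i ∈ fibSet n ∧ i % 2 = 0) := by
      intro hi
      rw [cyc_iff _ _ (by omega), mem_fib_top _ _ hi, testBit_top _ _ _ hi, testBit_top _ _ _ hi]
      simp [Nat.testBit_zero]
    constructor
    · rintro ⟨a, b⟩
      have := (key a).1 b
      exact ⟨((mem_fibSet_iff _ _).1 this.1).1, this⟩
    · rintro ⟨a, b⟩
      exact ⟨by omega, (key (by omega)).2 b⟩

lemma main_alg {K : Type*} [Field K] [CharP K 2] (n : ℕ) (β u : K) (hβ : β ≠ 0)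
    (hK : ∀ x : K, x ^ (2 ^ (n + 2)) = x) (hu : u ^ 3 + u = β) :
    ∑ i ∈ fibCycSet (n + 2), β ^ i ≠ 0 := by
  have two : (2 : K) = 0 := CharTwo.two_eq_zero
  have hcyc := cyc_sum β n
  have hu0 : u ≠ 0 := by rintro rfl; apply hβ; rw [← hu]; ring
  set F := fs β (fun _ => True) with hF
  set E := fs β (fun i => i % 2 = 0) with hE
  obtain ⟨b, hb⟩ : ∃ b : K, b = u / β := ⟨_, rfl⟩
  have hb0 : b ≠ 0 := by rw [hb]; exact div_ne_zero hu0 hβ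
  have hb1 : b = b ^ 2 + β ^ 2 * b ^ 4 := by
    rw [hb]
    field_simp
    rw [← hu]
    ring
  have hbk : ∀ k, b ^ (2 ^ k) = b ^ (2 ^ (k + 1)) + β ^ (2 ^ (k + 1)) * b ^ (2 ^ (k + 2)) := by
    intro k
    conv_lhs => rw [hb1]
    rw [add_pow_char_pow, mul_pow, ← pow_mul, ← pow_mul, ← pow_mul]
    congr 2 <;> ring
  have J : ∀ k, F (k + 1) * b ^ (2 ^ (k + 1)) + β ^ (2 ^ (k + 1)) * F k * b ^ (2 ^ (k + 2)) =
      b + β * b ^ 2 := by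
    intro k
    induction k with
    | zero =>
      simp only [hF, F0, F1, zero_add]
      norm_num
      linear_combination (-1 : K) * hb1
    | succ k ih =>
      rw [← ih, hF, Frec]
      linear_combination (-fs β (fun _ => True) (k + 1)) * hbk (k + 1)
  have JE : ∀ k, E (k + 1) * b ^ (2 ^ (k + 1)) + β ^ (2 ^ (k + 1)) * E k * b ^ (2 ^ (k + 2)) =
      b := by
    intro k
    induction k with
    | zero =>
      simp only [hE, E0, E1, zero_add]
      norm_num
      linear_combination (-1 : K) * hb1
    | succ k ih =>
      conv_rhs => rw [← ih]
      rw [hE, Erec]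
      linear_combination (-fs β (fun i => i % 2 = 0) (k + 1)) * hbk (k + 1)
  have W : ∀ k, β * (F (k + 1) * E k - F k * E (k + 1)) = β ^ (2 ^ (k + 1)) := by
    intro k
    induction k with
    | zero =>
      simp only [hF, hE, F0, F1, E0, E1, zero_add]
      ring
    | succ k ih =>
      rw [hF, hE, Frec, Erec, ← hF, ← hE]
      rw [pow_succ 2 (k + 1), pow_mul, pow_two]
      linear_combination (-β ^ (2 ^ (k + 1))) * ih -
        β ^ (2 ^ (k + 1)) * β ^ (2 ^ (k + 1)) * two
  have hJ := J n
  have hJE := JE n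
  have hW := W n
  have hbm := hK b
  have hβm := hK β
  rw [hbm] at hJ hJE
  set y := b ^ (2 ^ (n + 1)) with hy
  set x := β ^ (2 ^ (n + 1)) with hx
  have hyy : y ^ 2 = b := by rw [hy, ← pow_mul, ← pow_succ, hbm]
  have hxx : x ^ 2 = β := by rw [hx, ← pow_mul, ← pow_succ, hβm]
  -- b + β b^2 = y
  have hy1 : b + β * b ^ 2 = y := by
    have : (b + β * b ^ 2) ^ 2 = y ^ 2 := by
      rw [hyy]; linear_combination (β * b ^ 3) * two - hb1
    have h0 : (b + β * b ^ 2 - y) ^ 2 = 0 := by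
      linear_combination this + (y ^ 2 - (b + β * b ^ 2) * y) * two
    exact sub_eq_zero.1 (pow_eq_zero_iff (two_ne_zero)|>.1 h0)
  rw [hy1] at hJ
  have hx0 : x ≠ 0 := by rw [hx]; exact pow_ne_zero _ hβ
  have hdet : x * (F (n + 1) * E n - F n * E (n + 1)) = 1 := by
    apply mul_left_cancel₀ hx0
    rw [← hxx] at hW
    linear_combination hW
  have hy0 : y ≠ 0 := by rw [hy]; exact pow_ne_zero _ hb0
  have hz : F (n + 1) + x * E n = 0 := by
    have h1 : (F (n + 1) - 1) * (x * E n - 1) = x * F n * E (n + 1) := by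
      apply mul_left_cancel₀ (mul_ne_zero hy0 hb0)
      linear_combination (b * (x * E n - 1)) * hJ - b * x * F n * hJE
    linear_combination hdet - h1 + two
  intro h
  rw [h, hz] at hcyc
  simp at hcyc

open Classical in
lemma count {K : Type*} [Field K] [Fintype K] [CharP K 2] (R : Finset K)
    (hR : ∀ z ∈ R, z ^ 2 + z + 1 = 0) :
    3 * (Finset.univ.filter (fun β : K => ∀ u, u ^ 3 + u ≠ β)).card + R.card ≤
      Fintype.card K + 1 := by
  have two : (2 : K) = 0 := CharTwo.two_eq_zero
  set q := Fintype.card K with hq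
  let g : K → K := fun u => u ^ 3 + u
  let c : K → ℕ := fun β => (Finset.univ.filter (fun u => g u = β)).card
  have hc1 : ∑ β, c β = q := by
    have := Finset.card_eq_sum_card_fiberwise (f := g) (s := Finset.univ) (t := Finset.univ)
      (by simp)
    rw [hq, ← Finset.card_univ, this]
  let D := (Finset.univ : Finset (K × K)).filter (fun p => g p.1 = g p.2 ∧ p.1 ≠ p.2)
  have hD : ∀ p ∈ D, p.1 ^ 2 + p.1 * p.2 + p.2 ^ 2 + 1 = 0 ∧ p.1 ≠ p.2 := by
    intro p hp
    simp only [D, Finset.mem_filter, Finset.mem_univ, true_and, g] at hp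
    refine ⟨?_, hp.2⟩
    apply mul_left_cancel₀ (sub_ne_zero.2 hp.2)
    linear_combination hp.1
  have hc2 : ∑ β, (c β) ^ 2 = q + D.card := by
    have h1 : ∑ β, (c β) ^ 2 = ((Finset.univ : Finset (K × K)).filter
        (fun p => g p.1 = g p.2)).card := by
      rw [Finset.card_eq_sum_card_fiberwise (f := fun p => g p.1) (t := Finset.univ) (by simp)]
      apply Finset.sum_congr rfl
      intro β _
      rw [pow_two, ← Finset.card_product]
      congr 1
      ext ⟨a, b⟩
      simp only [Finset.mem_product, Finset.mem_filter, Finset.mem_univ, true_and]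
      constructor
      · rintro ⟨h, h'⟩; exact ⟨h.trans h'.symm, h⟩
      · rintro ⟨h, h'⟩; exact ⟨h', h ▸ h'⟩
    rw [h1, ← Finset.card_filter_add_card_filter_not (fun p : K × K => p.1 = p.2),
      Finset.filter_filter, Finset.filter_filter]
    congr 1
    rw [hq, ← Finset.card_univ]
    symm
    apply Finset.card_bij (fun a _ => (a, a))
    · simp
    · intro a _ b _ h; simpa using h
    · rintro ⟨a, b⟩ h
      simp only [Finset.mem_filter] at h
      exact ⟨a, by simp, by simp [h.2.2]⟩
  have hDle : D.card + R.card ≤ q := by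
    have h1 : D.card ≤ (Rᶜ).card := by
      apply Finset.card_le_card_of_injOn (fun p => if p.2 = 0 then 1 else p.1 / p.2)
      · rintro ⟨a, b⟩ hp
        have h := hD _ hp
        simp only [Finset.coe_compl, Set.mem_compl_iff, Finset.mem_coe]
        intro hmem
        have h3 := hR _ hmem
        simp only at h
        split_ifs at h3 with hb
        · apply one_ne_zero (α := K); linear_combination h3 - two
        · field_simp at h3
          apply one_ne_zero (α := K); linear_combination h.1 - h3
      · rintro ⟨a, b⟩ hp ⟨a', b'⟩ hp' heq
        obtain ⟨h, hne⟩ := hD _ hp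
        obtain ⟨h', hne'⟩ := hD _ hp'
        simp only at h h' hne hne' heq
        have sq : ∀ s t : K, s ^ 2 = t ^ 2 → s = t := by
          intro s t hst
          have h0 : (s - t) ^ 2 = 0 := by linear_combination hst + (t ^ 2 - s * t) * two
          exact sub_eq_zero.1 (pow_eq_zero_iff (two_ne_zero)|>.1 h0)
        split_ifs at heq with h1 h2 h2
        · subst h1 h2
          have : a = a' := sq _ _ (by linear_combination h - h')
          rw [this]
        · exfalso; field_simp at heq; exact hne' heq.symm
        · exfalso; field_simp at heq; exact hne heq
        · set z := a / b with hz
          have ha : a = z * b := by rw [hz]; field_simp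
          have ha' : a' = z * b' := by rw [heq]; field_simp
          have hzz : z ^ 2 + z + 1 ≠ 0 := by
            intro h0
            apply one_ne_zero (α := K); rw [ha] at h; linear_combination h - b ^ 2 * h0
          have : b = b' := by
            apply sq
            apply mul_left_cancel₀ hzz
            rw [ha] at h; rw [ha'] at h'
            linear_combination h - h'
          rw [ha, ha', this]
    rw [Finset.card_compl] at h1
    have := Finset.card_le_univ R
    omega
  have hpt : ∀ β : K, (3 : ℤ) * (if (∀ u, u ^ 3 + u ≠ β) then 1 else 0) ≤
      3 - 4 * (c β : ℤ) + (c β : ℤ) ^ 2 + (if β = 0 then 1 else 0) := by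
    intro β
    by_cases h0 : c β = 0
    · rw [h0]; split_ifs <;> simp
    · have hn : ¬ (∀ u, u ^ 3 + u ≠ β) := by
        intro h
        apply h0
        simp only [c, Finset.card_eq_zero, Finset.filter_eq_empty_iff, g]
        intro u _; exact h u
      rw [if_neg hn]
      by_cases hβ : β = 0
      · rw [if_pos hβ]; nlinarith [sq_nonneg ((c β : ℤ) - 2)]
      · rw [if_neg hβ]
        have h2 : c β ≠ 2 := by
          intro h2
          obtain ⟨u, v, huv, he⟩ := Finset.card_eq_two.1 h2
          have hm : ∀ w, g w = β ↔ w = u ∨ w = v := by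
            intro w
            have := Finset.ext_iff.1 he w
            simpa using this
          have hu := (hm u).2 (Or.inl rfl)
          have hv := (hm v).2 (Or.inr rfl)
          simp only [g] at hu hv hm
          have hcon : u ^ 2 + u * v + v ^ 2 + 1 = 0 := by
            apply mul_left_cancel₀ (sub_ne_zero.2 huv)
            linear_combination hu - hv
          have hw := (hm (u + v)).1 (by
            linear_combination hu + v * hcon + (u ^ 2 * v + u * v ^ 2) * two)
          rcases hw with h | h
          · have : v = 0 := by linear_combination h
            apply hβ; rw [← hv, this]; ring
          · have : u = 0 := by linear_combination h
            apply hβ; rw [← hu, this]; ring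
        rcases Nat.lt_or_ge (c β) 3 with h | h
        · have : c β = 1 := by omega
          rw [this]; norm_num
        · have : (3 : ℤ) ≤ c β := by exact_mod_cast h
          nlinarith
  have hs := Finset.sum_le_sum (fun β (_ : β ∈ (Finset.univ : Finset K)) => hpt β)
  rw [← Finset.mul_sum, Finset.sum_boole, Finset.sum_add_distrib, Finset.sum_add_distrib,
    Finset.sum_sub_distrib, ← Finset.mul_sum, Finset.sum_const, Finset.sum_ite_eq'] at hs
  have e1 : ∑ β, (c β : ℤ) = q := by exact_mod_cast hc1
  have e2 : ∑ β, (c β : ℤ) ^ 2 = q + D.card := by exact_mod_cast hc2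
  rw [e1, e2, Finset.card_univ, ← hq] at hs
  simp only [Finset.mem_univ, if_true, nsmul_eq_mul] at hs
  omega

theorem card_roots_fibCycPoly_le (m : ℕ) (hm : 4 ≤ m) :
    (Odd m → Nat.card {β : GaloisField 2 m // β ≠ 0 ∧ Polynomial.aeval β (fibCycPoly m) = 0} ≤
        (2 ^ m + 1) / 3) ∧
    (Even m → Nat.card {β : GaloisField 2 m // β ≠ 0 ∧ Polynomial.aeval β (fibCycPoly m) = 0} ≤
        (2 ^ m - 1) / 3) := by
  classical
  have hf : Finite (GaloisField 2 m) := inferInstance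
  letI : Fintype (GaloisField 2 m) := Fintype.ofFinite _
  have hcard : Fintype.card (GaloisField 2 m) = 2 ^ m := by
    rw [← Nat.card_eq_fintype_card]; exact GaloisField.card 2 m (by omega)
  haveI : CharP (GaloisField 2 m) 2 := inferInstance
  have two : (2 : GaloisField 2 m) = 0 := CharTwo.two_eq_zero
  have hle : Nat.card {β : GaloisField 2 m // β ≠ 0 ∧ Polynomial.aeval β (fibCycPoly m) = 0} ≤
      (Finset.univ.filter (fun β : GaloisField 2 m => ∀ u, u ^ 3 + u ≠ β)).card := by
    rw [Nat.card_eq_fintype_card, Fintype.card_subtype]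
    apply Finset.card_le_card
    intro β
    simp only [Finset.mem_filter, Finset.mem_univ, true_and]
    rintro ⟨h0, h1⟩ u hu
    obtain ⟨n, rfl⟩ : ∃ n, m = n + 2 := ⟨m - 2, by omega⟩
    refine main_alg n β u h0 (fun x => ?_) hu ?_
    · rw [← hcard]; exact FiniteField.pow_card x
    · rw [← h1]; simp [fibCycPoly]
  constructor
  · intro _
    have := count (K := GaloisField 2 m) ∅ (by simp)
    rw [hcard, Finset.card_empty] at this
    omega
  · intro he
    have h3 : 3 ∣ Fintype.card (GaloisField 2 m)ˣ := by
      rw [Fintype.card_units, hcard]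
      obtain ⟨k, rfl⟩ := he
      have := Nat.sub_dvd_pow_sub_pow 4 1 k
      rw [← two_mul, pow_mul]
      simpa using this
    haveI : Fact (Nat.Prime 3) := ⟨by norm_num⟩
    obtain ⟨w, hw⟩ := exists_prime_orderOf_dvd_card 3 h3
    have hw3 : (w : GaloisField 2 m) ^ 3 = 1 := by
      have := pow_orderOf_eq_one w
      rw [hw] at this
      rw [← Units.val_pow_eq_pow_val, this, Units.val_one]
    have hw1 : (w : GaloisField 2 m) ≠ 1 := by
      intro h
      have : w = 1 := Units.ext h
      rw [this, orderOf_one] at hw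
      omega
    generalize (w : GaloisField 2 m) = z at hw3 hw1
    have hz : z ^ 2 + z + 1 = 0 := by
      apply mul_left_cancel₀ (sub_ne_zero.2 hw1)
      linear_combination hw3
    have := count (K := GaloisField 2 m) {z, z + 1} (by
      intro x hx
      simp only [Finset.mem_insert, Finset.mem_singleton] at hx
      rcases hx with rfl | rfl
      · exact hz
      · linear_combination hz + (z + 1) * two)
    rw [hcard, Finset.card_pair (by simp)] at this
    omega
end

section
/- For every integer m ≥ 4, the number of nonzero elements β of the finite field F_{2^m} with f^cyc_m(β) = 0 equals (2^m+1)/3 if m is odd, and equals (2^m-1)/3 if m is even. -/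
open Polynomial

/-- transfer matrix product -/
noncomputable def fcP {K : Type*} [Field K] (β : K) : ℕ → Matrix (Fin 2) (Fin 2) K
  | 0 => 1
  | n + 1 => fcP β n * !![1, 1; β ^ 2 ^ n, 0]

/-- twisted linear map -/
def fcPhi {K : Type*} [Field K] (β : K) (v : K × K) : K × K :=
  (v.1 ^ 2 + v.2 ^ 2, β * v.1 ^ 2)

lemma fcP_zero {K : Type*} [Field K] (β : K) : fcP β 0 = 1 := rfl
lemma fcP_succ {K : Type*} [Field K] (β : K) (n : ℕ) :
    fcP β (n+1) = fcP β n * !![1, 1; β ^ 2 ^ n, 0] := rfl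

lemma fcP_succ_entries {K : Type*} [Field K] (β : K) (n : ℕ) (a : Fin 2) :
    fcP β (n+1) a 0 = fcP β n a 0 + fcP β n a 1 * β ^ 2 ^ n ∧
    fcP β (n+1) a 1 = fcP β n a 0 := by
  rw [fcP_succ]
  simp [Matrix.mul_apply, Fin.sum_univ_two]

lemma fcP_det {K : Type*} [Field K] [CharP K 2] (β : K) (n : ℕ) :
    (fcP β n 0 0 * fcP β n 1 1 + fcP β n 0 1 * fcP β n 1 0) * β = β ^ 2 ^ n := by
  induction n with
  | zero => simp [fcP_zero]
  | succ n ih =>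
    obtain ⟨h1, h2⟩ := fcP_succ_entries β n 0
    obtain ⟨h3, h4⟩ := fcP_succ_entries β n 1
    rw [h1, h2, h3, h4, pow_succ, pow_mul]
    have h : (2 : K) = 0 := CharTwo.two_eq_zero
    linear_combination (fcP β n 0 0 * fcP β n 1 0 * β) * h + β ^ 2 ^ n * ih

lemma fcP_frob {K : Type*} [Field K] [CharP K 2] (β : K) (n : ℕ) (b : Fin 2) :
    fcP β (n+1) 0 b = (fcP β n 0 b) ^ 2 + (fcP β n 1 b) ^ 2 ∧
    fcP β (n+1) 1 b = β * (fcP β n 0 b) ^ 2 := by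
  induction n generalizing b with
  | zero => fin_cases b <;> simp [fcP_succ, fcP_zero]
  | succ n ih =>
    have e0 := fcP_succ_entries β (n+1) 0
    have e1 := fcP_succ_entries β (n+1) 1
    have f0 := fcP_succ_entries β n 0
    have f1 := fcP_succ_entries β n 1
    have h : (2 : K) = 0 := CharTwo.two_eq_zero
    have hp : β ^ 2 ^ (n+1) = (β ^ 2 ^ n)^2 := by rw [pow_succ, pow_mul]
    fin_cases b
    · simp only [Fin.zero_eta]
      rw [e0.1, e1.1, hp]
      have g0 := congrArg (· ^ 2) f0.1
      have g1 := congrArg (· ^ 2) f1.1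
      simp only [CharTwo.add_sq] at g0 g1
      rw [g0, g1, (ih 0).1, (ih 1).1, (ih 0).2, (ih 1).2]
      constructor <;> ring
    · simp only [Fin.mk_one]
      rw [e0.2, e1.2, f0.2, f1.2]
      exact ih 0

lemma fcPhi_iter {K : Type*} [Field K] [CharP K 2] (β : K) (n : ℕ) (v : K × K) :
    (fcPhi β)^[n] v = (fcP β n 0 0 * v.1 ^ 2 ^ n + fcP β n 0 1 * v.2 ^ 2 ^ n,
      fcP β n 1 0 * v.1 ^ 2 ^ n + fcP β n 1 1 * v.2 ^ 2 ^ n) := by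
  induction n with
  | zero => simp [fcP_zero]
  | succ n ih =>
    rw [Function.iterate_succ_apply', ih]
    simp only [fcPhi, CharTwo.add_sq, (fcP_frob β n 0).1, (fcP_frob β n 0).2,
      (fcP_frob β n 1).1, (fcP_frob β n 1).2, pow_succ 2 n, pow_mul, mul_pow]
    ext <;> simp only <;> ring

lemma fcPhi_smul {K : Type*} [Field K] [CharP K 2] (β : K) (n : ℕ) (c : K) (v : K × K) :
    (fcPhi β)^[n] (c * v.1, c * v.2) =
      (c ^ 2 ^ n * ((fcPhi β)^[n] v).1, c ^ 2 ^ n * ((fcPhi β)^[n] v).2) := by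
  simp only [fcPhi_iter, mul_pow]
  ext <;> simp only <;> ring

lemma fcPhi_add {K : Type*} [Field K] [CharP K 2] (β : K) (v w : K × K) :
    fcPhi β (v + w) = fcPhi β v + fcPhi β w := by
  simp only [fcPhi, Prod.fst_add, Prod.snd_add, CharTwo.add_sq]
  ext <;> simp <;> ring

/-- trace -/
noncomputable def fcT {K : Type*} [Field K] (β : K) (m : ℕ) : K := fcP β m 0 0 + fcP β m 1 1

lemma fcT_sq {K : Type*} [Field K] [Fintype K] [CharP K 2] (β : K) (hβ : β ≠ 0) (m : ℕ)
    (hq : Fintype.card K = 2 ^ m) : fcT β m = 0 ∨ fcT β m = 1 := by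
  have hb : β ^ 2 ^ m = β := by rw [← hq]; exact FiniteField.pow_card β
  have e0 := fcP_succ_entries β m 0
  have e1 := fcP_succ_entries β m 1
  have f0 := fcP_frob β m 0
  have f1 := fcP_frob β m 1
  rw [hb] at e0 e1
  have h : (2 : K) = 0 := CharTwo.two_eq_zero
  have key : β * (fcT β m * (fcT β m - 1)) = 0 := by
    unfold fcT
    have a1 := f1.1.symm.trans e0.2
    have a2 := f1.2.symm.trans e1.2
    have a3 := f0.2.symm.trans e1.1
    linear_combination a3 - a2 + β * a1 + (β * fcP β m 0 0 * fcP β m 1 1 - β * fcP β m 0 1^2 + β * fcP β m 0 1^2) * h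
  rcases mul_eq_zero.mp key with h | h
  · exact absurd h hβ
  rcases mul_eq_zero.mp h with h | h
  · exact Or.inl h
  · exact Or.inr (sub_eq_zero.mp h)

lemma fcT_root {K : Type*} [Field K] [Fintype K] [CharP K 2] (β : K) (hβ : β ≠ 0) (m : ℕ)
    (hq : Fintype.card K = 2 ^ m) (x : K) (hx : x ≠ 0) (h : β ^ 2 * x ^ 3 + x + 1 = 0) :
    fcT β m = 0 := by
  have hpow : ∀ z : K, z ^ 2 ^ m = z := fun z => by rw [← hq]; exact FiniteField.pow_card z
  have h2 : (2 : K) = 0 := CharTwo.two_eq_zero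
  have hfix : fcPhi β (x, β * x ^ 2) = (x, β * x ^ 2) := by
    simp only [fcPhi]
    ext
    · simp only
      linear_combination x * h - x * h2
    · rfl
  have hit := Function.iterate_fixed hfix m
  rw [fcPhi_iter] at hit
  simp only [hpow, Prod.mk.injEq] at hit
  have hd := fcP_det β m
  rw [hpow] at hd
  have hd : fcP β m 0 0 * fcP β m 1 1 + fcP β m 0 1 * fcP β m 1 0 = 1 :=
    mul_right_cancel₀ hβ (by rw [hd, one_mul])
  obtain ⟨i1, i2⟩ := hit
  unfold fcT
  generalize fcP β m 0 0 = p at *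
  generalize fcP β m 0 1 = q at *
  generalize fcP β m 1 0 = r at *
  generalize fcP β m 1 1 = s at *
  have : x * (p + s) = 0 := by
    linear_combination (s - 1) * i1 - q * i2 - x * hd + (x*p+x*s-x + x * q * r) * h2
  exact (mul_eq_zero.mp this).resolve_left hx

lemma fcPhi_sum {K : Type*} [Field K] [CharP K 2] (β : K) (g : ℕ → K × K) (n : ℕ) :
    fcPhi β (∑ j ∈ Finset.range n, g j) = ∑ j ∈ Finset.range n, fcPhi β (g j) := by
  induction n with
  | zero => simp [fcPhi]
  | succ n ih => rw [Finset.sum_range_succ, fcPhi_add, ih, Finset.sum_range_succ]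

lemma fc_exists_c {K : Type*} [Field K] [Fintype K] (m : ℕ) (hm : 1 ≤ m)
    (hq : Fintype.card K = 2 ^ m) (a : ℕ → K) (ha : a 0 ≠ 0) :
    ∃ c : K, ∑ j ∈ Finset.range m, c ^ 2 ^ j * a j ≠ 0 := by
  by_contra! hc
  set p : K[X] := ∑ j ∈ Finset.range m, C (a j) * X ^ 2 ^ j with hp
  have hdeg : p.natDegree < Fintype.card K := by
    rw [hq]
    refine lt_of_le_of_lt (Polynomial.natDegree_sum_le_of_forall_le (n := 2 ^ (m-1)) _ _ ?_) ?_
    · intro j hj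
      refine (Polynomial.natDegree_C_mul_X_pow_le _ _).trans ?_
      have := Finset.mem_range.mp hj
      exact Nat.pow_le_pow_right (by norm_num) (by omega)
    · exact Nat.pow_lt_pow_right (by norm_num) (by omega)
  have h0 : p = 0 := by
    refine Polynomial.eq_zero_of_natDegree_lt_card_of_eval_eq_zero p (f := id)
      Function.injective_id (fun c => ?_) hdeg
    rw [← hc c, hp, Polynomial.eval_finsetSum]
    refine Finset.sum_congr rfl fun j _ => ?_
    simp only [id, eval_mul, eval_C, eval_pow, eval_X]
    ring
  apply ha
  have h1 : p.coeff 1 = a 0 := by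
    rw [hp, Polynomial.finsetSum_coeff, Finset.sum_eq_single 0]
    · simp
    · intro j _ hj
      have : 1 ≠ 2 ^ j := by
        have := Nat.one_lt_two_pow hj
        omega
      rw [Polynomial.coeff_C_mul_X_pow, if_neg this]
    · intro h
      simp at h; omega
  rw [← h1, h0]; simp

lemma fcT_zero {K : Type*} [Field K] [Fintype K] [CharP K 2] (β : K) (hβ : β ≠ 0) (m : ℕ)
    (hm : 1 ≤ m) (hq : Fintype.card K = 2 ^ m) (hT : fcT β m = 0) :
    ∃ x : K, x ≠ 0 ∧ β ^ 2 * x ^ 3 + x + 1 = 0 := by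
  have hpow : ∀ z : K, z ^ 2 ^ m = z := fun z => by rw [← hq]; exact FiniteField.pow_card z
  have h2 : (2 : K) = 0 := CharTwo.two_eq_zero
  have hd := fcP_det β m
  rw [hpow] at hd
  have hd : fcP β m 0 0 * fcP β m 1 1 + fcP β m 0 1 * fcP β m 1 0 = 1 :=
    mul_right_cancel₀ hβ (by rw [hd, one_mul])
  have hev : ∃ v : K × K, v ≠ 0 ∧ (fcPhi β)^[m] v = v := by
    have hdet : (fcP β m - 1).det = 0 := by
      rw [Matrix.det_fin_two]
      simp only [Matrix.sub_apply, Matrix.one_apply_eq, ne_eq, zero_ne_one, not_false_eq_true,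
        Matrix.one_apply_ne, one_ne_zero]
      unfold fcT at hT
      linear_combination hd - hT + (1 - fcP β m 0 1 * fcP β m 1 0) * h2
    obtain ⟨w, hw, hw0⟩ := Matrix.exists_mulVec_eq_zero_iff.mpr hdet
    refine ⟨(w 0, w 1), ?_, ?_⟩
    · intro h
      apply hw
      simp only [Prod.mk_eq_zero] at h
      ext i; fin_cases i
      · exact h.1
      · exact h.2
    · rw [fcPhi_iter]
      have k0 := congrFun hw0 0
      have k1 := congrFun hw0 1
      simp [Matrix.mulVec, dotProduct, Fin.sum_univ_two] at k0 k1
      simp only [hpow]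
      ext
      · simp only; linear_combination k0
      · simp only; linear_combination k1
  obtain ⟨v, hv, hfix⟩ := hev
  have hu : ∃ u : K × K, u ≠ 0 ∧ fcPhi β u = u := by
    have hc : ∃ c : K, ∑ j ∈ Finset.range m, (fcPhi β)^[j] (c * v.1, c * v.2) ≠ 0 := by
      by_cases h1 : v.1 = 0
      · have h2 : v.2 ≠ 0 := fun h => hv (Prod.ext h1 h)
        obtain ⟨c, hc⟩ := fc_exists_c m hm hq (fun j => ((fcPhi β)^[j] v).2) h2
        refine ⟨c, fun h => hc ?_⟩
        have := congrArg Prod.snd h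
        simpa [Prod.snd_sum, fcPhi_smul] using this
      · obtain ⟨c, hc⟩ := fc_exists_c m hm hq (fun j => ((fcPhi β)^[j] v).1) h1
        refine ⟨c, fun h => hc ?_⟩
        have := congrArg Prod.fst h
        simpa [Prod.fst_sum, fcPhi_smul] using this
    obtain ⟨c, hc⟩ := hc
    refine ⟨_, hc, ?_⟩
    rw [fcPhi_sum]
    simp only [← Function.iterate_succ_apply' (fcPhi β)]
    have s1 := Finset.sum_range_succ' (fun j => (fcPhi β)^[j] (c * v.1, c * v.2)) m
    have s2 := Finset.sum_range_succ (fun j => (fcPhi β)^[j] (c * v.1, c * v.2)) m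
    have s3 : (fcPhi β)^[m] (c * v.1, c * v.2) = (c * v.1, c * v.2) := by
      rw [fcPhi_smul, hfix, hpow]
    rw [s2, s3] at s1
    exact (add_right_cancel s1).symm
  obtain ⟨⟨x, y⟩, hne, hf⟩ := hu
  simp only [fcPhi, Prod.mk.injEq] at hf
  obtain ⟨g1, g2⟩ := hf
  have hx : x ≠ 0 := by
    rintro rfl
    apply hne
    simp at g2
    simp [← g2]
  refine ⟨x, hx, ?_⟩
  refine (mul_eq_zero.mp (?_ : x * (β ^ 2 * x ^ 3 + x + 1) = 0)).resolve_left hx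
  rw [← g2] at g1
  linear_combination g1 + x * h2

lemma fc_count {K : Type*} [Field K] [Fintype K] [DecidableEq K] [CharP K 2] :
    3 * (((Finset.univ : Finset K).filter (fun γ => γ ≠ 0 ∧ ¬ ∃ u : K, u ^ 3 + u ^ 2 = γ)).card : ℤ)
      = 3 + ((Finset.univ : Finset K).filter (fun t => t ≠ 0 ∧ t ≠ 1 ∧ t ^ 2 + t + 1 ≠ 0)).card := by
  have h2 : (2 : K) = 0 := CharTwo.two_eq_zero
  set g : K → K := fun u => u ^ 3 + u ^ 2 with hg
  set S : Finset K := Finset.univ.filter (fun u => u ≠ 0 ∧ u ≠ 1) with hS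
  set R : Finset K := Finset.univ.filter (fun γ => γ ≠ 0) with hR
  have hgS : ∀ u, g u ≠ 0 ↔ u ∈ S := by
    intro u
    have : g u = u ^ 2 * (u - 1) := by simp only [hg]; linear_combination u ^ 2 * h2
    rw [this]
    simp [hS, sub_eq_zero]
  let k : K → Finset K := fun γ => S.filter (fun u => g u = γ)
  have hk : ∀ γ ∈ R, (3 - 4 * ((k γ).card : ℤ) + (k γ).card ^ 2) = if (∃ u, g u = γ) then 0 else 3 := by
    intro γ hγ
    have hγ0 : γ ≠ 0 := by simpa [hR] using hγ
    have hmem : ∀ u, u ∈ k γ ↔ g u = γ := by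
      intro u
      simp only [k, Finset.mem_filter]
      constructor
      · exact fun h => h.2
      · exact fun h => ⟨(hgS u).mp (h ▸ hγ0), h⟩
    have hmS : ∀ u, g u = γ → u ≠ 0 ∧ u ≠ 1 := by
      intro u h
      have := (hgS u).mp (h ▸ hγ0)
      simpa [hS] using this
    split_ifs with hex
    · obtain ⟨u, hu⟩ := hex
      by_cases hv : ∃ v, v ≠ u ∧ g v = γ
      · obtain ⟨v, hvu, hv⟩ := hv
        have hq : u ^ 2 + u * v + v ^ 2 + u + v = 0 := by
          have : (v - u) * (u ^ 2 + u * v + v ^ 2 + u + v) = 0 := by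
            have := hv.trans hu.symm
            simp only [hg] at this
            linear_combination this
          exact (mul_eq_zero.mp this).resolve_left (sub_ne_zero.mpr hvu)
        have hset : k γ = {u, v, 1 + u + v} := by
          ext w
          rw [hmem]
          simp only [Finset.mem_insert, Finset.mem_singleton]
          have hfac : g w - γ = (w - u) * (w - v) * (w - (1 + u + v)) := by
            rw [← hu]
            simp only [hg]
            linear_combination (w + u) * hq + (w^2*(1+u+v) - w*u*v - w * (u^2+u*v+v^2+u+v) - u * (u^2+u*v+v^2+u+v) + u^2*v+u*v^2+u*v+u^2+u^3 - u^2 - u^3) * h2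
          rw [← sub_eq_zero, hfac]
          simp only [mul_eq_zero, sub_eq_zero, or_assoc]
        have hw1 : u ≠ 1 + u + v := by
          intro h
          exact (hmS v hv).2 (by linear_combination -h - h2)
        have hw2 : v ≠ 1 + u + v := by
          intro h
          exact (hmS u hu).2 (by linear_combination -h - h2)
        have hc : (k γ).card = 3 := by
          rw [hset]
          exact Finset.card_eq_three.mpr ⟨u, v, _, hvu.symm, hw1, hw2, rfl⟩
        rw [hc]; norm_num
      · push Not at hv
        have hset : k γ = {u} := by
          ext w
          rw [hmem, Finset.mem_singleton]
          constructor
          · intro h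
            by_contra hne
            exact hv w hne h
          · rintro rfl; exact hu
        rw [hset]; simp
    · have hset : k γ = ∅ := by
        apply Finset.eq_empty_of_forall_notMem
        intro u hu
        exact hex ⟨u, (hmem u).mp hu⟩
      rw [hset]; simp
  have hmaps : ∀ u ∈ S, g u ∈ R := by
    intro u hu
    simpa [hR] using (hgS u).mpr hu
  have hs1 : ∑ γ ∈ R, ((k γ).card : ℤ) = S.card := by
    rw [Finset.card_eq_sum_card_fiberwise hmaps]; push_cast; rfl
  have hs2 : ∑ γ ∈ R, ((k γ).card : ℤ) ^ 2
      = S.card + ((Finset.univ : Finset K).filter (fun t => t ≠ 0 ∧ t ≠ 1 ∧ t ^ 2 + t + 1 ≠ 0)).card := by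
    set Q : Finset (K × K) := (S ×ˢ S).filter (fun p => g p.1 = g p.2) with hQ
    have hQ1 : ∑ γ ∈ R, ((k γ).card : ℤ) ^ 2 = Q.card := by
      have hm : ∀ p ∈ Q, g p.1 ∈ R := by
        intro p hp
        simp only [hQ, Finset.mem_filter, Finset.mem_product] at hp
        exact hmaps _ hp.1.1
      rw [Finset.card_eq_sum_card_fiberwise hm]
      push_cast
      refine Finset.sum_congr rfl fun γ _ => ?_
      rw [sq, ← Nat.cast_mul, ← Finset.card_product]
      congr 2
      ext ⟨u, v⟩
      simp only [k, hQ, Finset.mem_product, Finset.mem_filter]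
      constructor
      · rintro ⟨⟨a, b⟩, c, d⟩
        exact ⟨⟨⟨a, c⟩, b.trans d.symm⟩, b⟩
      · rintro ⟨⟨⟨a, c⟩, b⟩, d⟩
        exact ⟨⟨a, d⟩, c, b ▸ d⟩
    rw [hQ1, ← Finset.card_filter_add_card_filter_not (s := Q) (fun p => p.1 = p.2)]
    push_cast
    congr 2
    · refine (Finset.card_bij (fun u _ => (u, u)) ?_ ?_ ?_).symm
      · intro u hu; simp [hQ, hu]
      · intro a _ b _ h; exact (Prod.mk.inj h).1
      · rintro ⟨u, v⟩ h
        simp only [hQ, Finset.mem_filter, Finset.mem_product] at h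
        obtain ⟨⟨⟨a, b⟩, c⟩, rfl⟩ := h
        exact ⟨u, a, rfl⟩
    · symm
      refine Finset.card_bij (fun t _ => ((1 + t) / (t ^ 2 + t + 1), t * ((1 + t) / (t ^ 2 + t + 1)))) ?_ ?_ ?_
      · intro t ht
        simp only [Finset.mem_filter, Finset.mem_univ, true_and] at ht
        obtain ⟨t0, t1, t3⟩ := ht
        have ht1 : 1 + t ≠ 0 := fun h => t1 (by linear_combination h - h2)
        have hgg : g ((1 + t) / (t ^ 2 + t + 1)) = g (t * ((1 + t) / (t ^ 2 + t + 1))) := by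
          have hD : (1 + t) / (t ^ 2 + t + 1) * (t ^ 2 + t + 1) = 1 + t := div_mul_cancel₀ _ t3
          simp only [hg]
          generalize (1 + t) / (t ^ 2 + t + 1) = u at *
          linear_combination u ^ 2 * (1 - t) * hD + (u ^ 2 - t ^ 2 * u ^ 2) * h2
        have hus : (1 + t) / (t ^ 2 + t + 1) ∈ S := by
          simp only [hS, Finset.mem_filter, Finset.mem_univ, true_and]
          refine ⟨div_ne_zero ht1 t3, fun h => t0 ?_⟩
          rw [div_eq_one_iff_eq t3] at h
          exact pow_eq_zero_iff (two_ne_zero) |>.mp (by linear_combination -h)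
        simp only [Finset.mem_filter, hQ, Finset.mem_product]
        refine ⟨⟨⟨hus, ?_⟩, hgg⟩, ?_⟩
        · rw [← hgS, ← hgg, hgS]; exact hus
        · intro h
          apply t1
          exact (mul_right_cancel₀ (div_ne_zero ht1 t3) (by rw [one_mul]; exact h)).symm
      · intro a ha b hb h
        simp only [Finset.mem_filter, Finset.mem_univ, true_and] at ha hb
        obtain ⟨e1, e2⟩ := Prod.mk.inj h
        rw [← e1] at e2
        have ht1 : 1 + a ≠ 0 := fun h => ha.2.1 (by linear_combination h - h2)
        exact mul_right_cancel₀ (div_ne_zero ht1 ha.2.2) e2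
      · rintro ⟨u, v⟩ h
        simp only [hQ, hS, Finset.mem_filter, Finset.mem_product, Finset.mem_univ, true_and] at h
        obtain ⟨⟨⟨⟨u0, u1⟩, v0, v1⟩, huv⟩, hne⟩ := h
        have hq : u ^ 2 + u * v + v ^ 2 + u + v = 0 := by
          have : (v - u) * (u ^ 2 + u * v + v ^ 2 + u + v) = 0 := by
            simp only [hg] at huv
            linear_combination -huv
          exact (mul_eq_zero.mp this).resolve_left (sub_ne_zero.mpr (Ne.symm hne))
        have hd : (v / u) ^ 2 + v / u + 1 ≠ 0 := by
          intro h
          have h' : u ^ 2 + u * v + v ^ 2 = 0 := by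
            field_simp at h
            linear_combination h
          apply hne
          linear_combination hq - h' - v * h2
        have hu : (1 + v / u) / ((v / u) ^ 2 + v / u + 1) = u := by
          rw [div_eq_iff hd]
          field_simp
          linear_combination hq - (u^2+u*v+v^2) * h2
        refine ⟨v / u, ?_, ?_⟩
        · simp only [Finset.mem_filter, Finset.mem_univ, true_and]
          refine ⟨div_ne_zero v0 u0, ?_, hd⟩
          intro h
          exact hne ((div_eq_one_iff_eq u0).mp h).symm
        · rw [hu, div_mul_cancel₀ _ u0]
  have hRS : (R.card : ℤ) = S.card + 1 := by
    have : R = insert 1 S := by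
      ext x; simp [hR, hS]
      by_cases h : x = 1 <;> simp [h]
    rw [this, Finset.card_insert_of_notMem (by simp [hS])]
    push_cast; rfl
  have hsum := Finset.sum_congr rfl hk
  rw [Finset.sum_add_distrib, Finset.sum_sub_distrib, ← Finset.mul_sum, hs1, hs2,
    Finset.sum_ite, Finset.sum_const_zero, zero_add, Finset.sum_const, Finset.sum_const,
    hR, Finset.filter_filter, ← hR] at hsum
  simp only [nsmul_eq_mul] at hsum
  linarith

lemma fc_three {K : Type*} [Field K] [Fintype K] [DecidableEq K] [CharP K 2] (m : ℕ) (hm : 1 ≤ m)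
    (hq : Fintype.card K = 2 ^ m) :
    ((Finset.univ : Finset K).filter (fun t => t ≠ 0 ∧ t ≠ 1 ∧ t ^ 2 + t + 1 ≠ 0)).card
     = if Even m then 2 ^ m - 4 else 2 ^ m - 2 := by
  have h2 : (2 : K) = 0 := CharTwo.two_eq_zero
  have hpow : ∀ z : K, z ^ 2 ^ m = z := fun z => by rw [← hq]; exact FiniteField.pow_card z
  split_ifs with he
  · have hdvd : 3 ∣ Fintype.card Kˣ := by
      rw [Fintype.card_units, hq]
      obtain ⟨k, rfl⟩ := he
      rw [← two_mul, pow_mul]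
      simpa using Nat.sub_dvd_pow_sub_pow 4 1 k
    have : Fact (Nat.Prime 3) := ⟨by norm_num⟩
    obtain ⟨w, hw⟩ := exists_prime_orderOf_dvd_card 3 hdvd
    have hw1 : (w : K) ≠ 1 := by
      intro h
      have : w = 1 := Units.ext h
      rw [this, orderOf_one] at hw
      omega
    have hw3 : (w : K) ^ 3 = 1 := by
      have := pow_orderOf_eq_one w
      rw [hw] at this
      rw [← Units.val_pow_eq_pow_val, this]; rfl
    have hroot : (w : K) ^ 2 + w + 1 = 0 := by
      refine (mul_eq_zero.mp (?_ : ((w : K) - 1) * ((w : K) ^ 2 + w + 1) = 0)).resolve_left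
        (sub_ne_zero.mpr hw1)
      linear_combination hw3
    have hw0 : (w : K) ≠ 0 := w.ne_zero
    have hset : (Finset.univ : Finset K).filter (fun t => t ≠ 0 ∧ t ≠ 1 ∧ t ^ 2 + t + 1 ≠ 0)
       = ({0, 1, (w : K), (w : K) + 1} : Finset K)ᶜ := by
      ext t
      have hf : t ^ 2 + t + 1 = (t - w) * (t - (w + 1)) := by
        linear_combination hroot + (t * w + t  - w^2 - w) * h2
      simp [hf, sub_eq_zero, not_or]
    rw [hset, Finset.card_compl, hq]
    congr 1
    rw [Finset.card_insert_of_notMem, Finset.card_insert_of_notMem, Finset.card_pair]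
    · intro h; simp at h
    · simp only [Finset.mem_insert, Finset.mem_singleton, not_or]
      exact ⟨Ne.symm hw1, fun h => hw0 (by linear_combination -h)⟩
    · simp only [Finset.mem_insert, Finset.mem_singleton, not_or]
      exact ⟨zero_ne_one, Ne.symm hw0, fun h => hw1 (by linear_combination -h - h2)⟩
  · have hset : (Finset.univ : Finset K).filter (fun t => t ≠ 0 ∧ t ≠ 1 ∧ t ^ 2 + t + 1 ≠ 0)
       = ({0, 1} : Finset K)ᶜ := by
      ext t
      simp only [Finset.mem_filter, Finset.mem_univ, true_and, Finset.mem_compl,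
        Finset.mem_insert, Finset.mem_singleton, not_or]
      constructor
      · exact fun h => ⟨h.1, h.2.1⟩
      · rintro ⟨h0, h1⟩
        refine ⟨h0, h1, fun h => ?_⟩
        have h3 : t ^ 3 = 1 := by linear_combination (t - 1) * h
        obtain ⟨k, rfl⟩ := Nat.not_even_iff_odd.mp he
        have hmod : ∃ l, 2 ^ (2 * k + 1) = 3 * l + 2 := by
          have : 2 ^ (2 * k + 1) % 3 = 2 := by
            rw [pow_succ, pow_mul, Nat.mul_mod, Nat.pow_mod]; simp
          exact ⟨2 ^ (2 * k + 1) / 3, by omega⟩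
        obtain ⟨l, hl⟩ := hmod
        have := hpow t
        rw [hl, pow_add, pow_mul, h3, one_pow, one_mul] at this
        exact h1 (mul_right_cancel₀ h0 (by linear_combination this))
    rw [hset, Finset.card_compl, hq, Finset.card_pair zero_ne_one]

/-- bits of a word, extended by `b` -/
def fcW (n i : ℕ) (b : Bool) (j : ℕ) : Bool := if j < n then i.testBit j else b

/-- admissible words -/
abbrev fcOk (n i : ℕ) (a b : Bool) : Prop :=
  fcW n i b 0 = a ∧ ∀ j < n, ¬ (fcW n i b j = true ∧ fcW n i b (j+1) = true)

/-- word sum -/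
def fcS {K : Type*} [Field K] (β : K) (n : ℕ) (a b : Bool) : K :=
  ∑ i ∈ Finset.range (2 ^ n), if fcOk n i a b then β ^ i else 0

lemma fcW_low (n i : ℕ) (hi : i < 2 ^ n) (b : Bool) (j : ℕ) (hj : j ≤ n) :
    fcW (n+1) i b j = fcW n i false j := by
  unfold fcW
  rcases lt_or_eq_of_le hj with h | rfl
  · simp [h, Nat.lt_succ_of_lt h]
  · simp [Nat.testBit_lt_two_pow hi]

lemma fcW_high (n i : ℕ) (hi : i < 2 ^ n) (b : Bool) (j : ℕ) (hj : j ≤ n) :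
    fcW (n+1) (2 ^ n + i) b j = fcW n i true j := by
  unfold fcW
  rcases lt_or_eq_of_le hj with h | rfl
  · simp [h, Nat.lt_succ_of_lt h, Nat.testBit_two_pow_add_gt h]
  · simp [Nat.testBit_two_pow_add_eq, Nat.testBit_lt_two_pow hi]

lemma fcOk_step (n i i' : ℕ) (a b c : Bool)
    (h : ∀ j ≤ n, fcW (n+1) i' b j = fcW n i c j) :
    fcOk (n+1) i' a b ↔ fcOk n i a c ∧ ¬ (c = true ∧ b = true) := by
  unfold fcOk
  rw [Nat.forall_lt_succ_right, h 0 (Nat.zero_le _), h n le_rfl]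
  have e1 : fcW n i c n = c := by simp [fcW]
  have e2 : fcW (n+1) i' b (n+1) = b := by simp [fcW]
  rw [e1, e2, and_assoc]
  refine and_congr_right fun _ => and_congr_left fun _ => ?_
  refine forall_congr' fun j => forall_congr' fun hj => ?_
  rw [h j hj.le, h (j+1) hj]

lemma fcS_succ {K : Type*} [Field K] (β : K) (n : ℕ) (a : Bool) :
    fcS β (n+1) a false = fcS β n a false + fcS β n a true * β ^ 2 ^ n ∧
    fcS β (n+1) a true = fcS β n a false := by
  have key : ∀ b, fcS β (n+1) a b = fcS β n a false +
      ∑ i ∈ Finset.range (2 ^ n), if fcOk n i a true ∧ ¬ (b = true) then β ^ (2 ^ n + i) else 0 := by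
    intro b
    unfold fcS
    rw [pow_succ, mul_two, Finset.sum_range_add]
    congr 1
    · refine Finset.sum_congr rfl fun i hi => ?_
      have := fcOk_step n i i a b false (fcW_low n i (Finset.mem_range.mp hi) b)
      simp only [this]
      simp
    · refine Finset.sum_congr rfl fun i hi => ?_
      have := fcOk_step n i (2 ^ n + i) a b true (fcW_high n i (Finset.mem_range.mp hi) b)
      simp only [this]
      simp
  constructor
  · rw [key]
    congr 1
    unfold fcS
    rw [Finset.sum_mul]
    refine Finset.sum_congr rfl fun i _ => ?_
    by_cases h : fcOk n i a true
    · rw [if_pos ⟨h, by simp⟩, if_pos h]; ring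
    · rw [if_neg (fun h' => h h'.1), if_neg h]; ring
  · rw [key]
    simp

lemma fcS_cyc {K : Type*} [Field K] [Algebra (ZMod 2) K] (β : K) (m : ℕ) (hm : 4 ≤ m) :
    fcS β m false false + fcS β m true true = 1 + aeval β (fibCycPoly m) := by
  have hok : ∀ i a, fcOk m i a a ↔ (i.testBit 0 = a ∧ ∀ j < m, ¬(i.testBit j ∧ i.testBit ((j + 1) % m))) := by
    intro i a
    have h0 : fcW m i a 0 = i.testBit 0 := by simp only [fcW]; rw [if_pos (by omega)]
    unfold fcOk
    rw [h0]
    refine and_congr_right fun ha => forall_congr' fun j => forall_congr' fun hj => ?_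
    have h1 : fcW m i a j = i.testBit j := by simp only [fcW]; rw [if_pos hj]
    have h2 : fcW m i a (j+1) = i.testBit ((j + 1) % m) := by
      simp only [fcW]
      split_ifs with h
      · rw [Nat.mod_eq_of_lt h]
      · have : j + 1 = m := by omega
        rw [this, Nat.mod_self, ha]
    rw [h1, h2]
  have h4 : 16 ≤ 2 ^ m := by
    calc 16 = 2 ^ 4 := by norm_num
      _ ≤ 2 ^ m := Nat.pow_le_pow_right (by norm_num) hm
  have hset : (Finset.range (2 ^ m)).filter
      (fun i => ∀ j < m, ¬(i.testBit j ∧ i.testBit ((j + 1) % m))) = insert 0 (fibCycSet m) := by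
    ext i
    simp only [Finset.mem_insert, fibCycSet, Finset.mem_filter, Finset.mem_range, Finset.mem_Icc]
    constructor
    · rintro ⟨h1, h2⟩
      by_cases hi : i = 0
      · exact Or.inl hi
      · refine Or.inr ⟨⟨by omega, ?_⟩, h2⟩
        by_contra hc
        have : i = 2 ^ m - 1 := by omega
        refine h2 0 (by omega) ?_
        rw [this, Nat.testBit_two_pow_sub_one, Nat.testBit_two_pow_sub_one]
        have : (0 + 1) % m < m := Nat.mod_lt _ (by omega)
        simp only [this, decide_true, and_true]
        simp; try omega
    · rintro (rfl | ⟨h1, h2⟩)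
      · simp
      · exact ⟨by omega, h2⟩
  have hn0 : (0 : ℕ) ∉ fibCycSet m := by simp [fibCycSet]
  have : aeval β (fibCycPoly m) = ∑ i ∈ fibCycSet m, β ^ i := by
    simp [fibCycPoly]
  rw [this]
  have h3 := Finset.sum_insert (f := fun i => β ^ i) hn0
  rw [pow_zero] at h3
  rw [← h3, ← hset, Finset.sum_filter]
  unfold fcS
  rw [← Finset.sum_add_distrib]
  refine Finset.sum_congr rfl fun i _ => ?_
  simp only [hok]
  cases i.testBit 0 <;> simp

lemma fcP_eq_fcS {K : Type*} [Field K] (β : K) (n : ℕ) :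
    (fcP β n 0 0 = fcS β n false false ∧ fcP β n 0 1 = fcS β n false true) ∧
    (fcP β n 1 0 = fcS β n true false ∧ fcP β n 1 1 = fcS β n true true) := by
  induction n with
  | zero => simp [fcP_zero, fcS, fcW]
  | succ n ih =>
    obtain ⟨⟨a, b⟩, c, d⟩ := ih
    refine ⟨⟨?_, ?_⟩, ?_, ?_⟩
    · rw [(fcP_succ_entries β n 0).1, (fcS_succ β n false).1, a, b]
    · rw [(fcP_succ_entries β n 0).2, (fcS_succ β n false).2, a]
    · rw [(fcP_succ_entries β n 1).1, (fcS_succ β n true).1, c, d]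
    · rw [(fcP_succ_entries β n 1).2, (fcS_succ β n true).2, c]

lemma fc_root_iff {K : Type*} [Field K] [Fintype K] [CharP K 2] [Algebra (ZMod 2) K]
    (β : K) (hβ : β ≠ 0) (m : ℕ) (hm : 4 ≤ m) (hq : Fintype.card K = 2 ^ m) :
    aeval β (fibCycPoly m) = 0 ↔ ¬ ∃ u : K, u ^ 3 + u ^ 2 = β ^ 2 := by
  have h2 : (2 : K) = 0 := CharTwo.two_eq_zero
  have hT : fcT β m = 1 + aeval β (fibCycPoly m) := by
    rw [← fcS_cyc β m hm, fcT, (fcP_eq_fcS β m).1.1, (fcP_eq_fcS β m).2.2]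
  have hiff : (∃ x : K, x ≠ 0 ∧ β ^ 2 * x ^ 3 + x + 1 = 0) ↔ ∃ u : K, u ^ 3 + u ^ 2 = β ^ 2 := by
    constructor
    · rintro ⟨x, hx, h⟩
      refine ⟨x⁻¹, ?_⟩
      field_simp
      linear_combination -h + (1 + x) * h2
    · rintro ⟨u, h⟩
      have hu : u ≠ 0 := by
        rintro rfl
        apply hβ
        simpa using h.symm
      refine ⟨u⁻¹, inv_ne_zero hu, ?_⟩
      rw [← h]
      field_simp
      linear_combination (1 + u) * h2
  rw [← hiff]
  constructor
  · rintro h ⟨x, hx, hr⟩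
    have := fcT_root β hβ m hq x hx hr
    rw [hT, h] at this
    simp at this
  · intro h
    rcases fcT_sq β hβ m hq with h0 | h1
    · exact absurd (fcT_zero β hβ m (by omega) hq h0) h
    · rw [hT] at h1
      linear_combination h1

lemma fc_main (m : ℕ) (hm : 4 ≤ m) :
    3 * (Nat.card {β : GaloisField 2 m // β ≠ 0 ∧ aeval β (fibCycPoly m) = 0})
      = 3 + if Even m then 2 ^ m - 4 else 2 ^ m - 2 := by
  classical
  have : Fintype (GaloisField 2 m) := Fintype.ofFinite _
  have : CharP (GaloisField 2 m) 2 := inferInstance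
  have hq : Fintype.card (GaloisField 2 m) = 2 ^ m := by
    rw [← Nat.card_eq_fintype_card]; exact GaloisField.card 2 m (by omega)
  have hc := fc_count (K := GaloisField 2 m)
  rw [fc_three m (by omega) hq] at hc
  have hN : Nat.card {β : GaloisField 2 m // β ≠ 0 ∧ aeval β (fibCycPoly m) = 0} =
      ((Finset.univ : Finset (GaloisField 2 m)).filter
        (fun γ => γ ≠ 0 ∧ ¬ ∃ u, u ^ 3 + u ^ 2 = γ)).card := by
    rw [Nat.card_eq_fintype_card, Fintype.card_subtype]
    have hinj : Function.Injective (fun β : GaloisField 2 m => β ^ 2) := by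
      intro a b h
      exact CharTwo.sq_injective h
    refine Finset.card_bij (fun β _ => β ^ 2) ?_ (fun a _ b _ h => hinj h) ?_
    · intro β hb
      simp only [Finset.mem_filter, Finset.mem_univ, true_and] at hb ⊢
      exact ⟨pow_ne_zero 2 hb.1, (fc_root_iff β hb.1 m hm hq).mp hb.2⟩
    · intro γ hγ
      simp only [Finset.mem_filter, Finset.mem_univ, true_and] at hγ
      obtain ⟨β, rfl⟩ := Finite.surjective_of_injective hinj γ
      have hb : β ≠ 0 := by
        rintro rfl
        exact hγ.1 (by simp)
      refine ⟨β, ?_, rfl⟩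
      simp only [Finset.mem_filter, Finset.mem_univ, true_and]
      exact ⟨hb, (fc_root_iff β hb m hm hq).mpr hγ.2⟩
  rw [hN]
  exact_mod_cast hc

theorem card_roots_fibCycPoly (m : ℕ) (hm : 4 ≤ m) :
    (Odd m → Nat.card {β : GaloisField 2 m // β ≠ 0 ∧ Polynomial.aeval β (fibCycPoly m) = 0} =
        (2 ^ m + 1) / 3) ∧
    (Even m → Nat.card {β : GaloisField 2 m // β ≠ 0 ∧ Polynomial.aeval β (fibCycPoly m) = 0} =
        (2 ^ m - 1) / 3) := by
  have h := fc_main m hm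
  have h4 : 16 ≤ 2 ^ m := by
    calc 16 = 2 ^ 4 := by norm_num
      _ ≤ 2 ^ m := Nat.pow_le_pow_right (by norm_num) hm
  constructor
  · intro ho
    rw [if_neg (Nat.not_even_iff_odd.mpr ho)] at h
    omega
  · intro he
    rw [if_pos he] at h
    omega
end
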